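/- Let a, b ∈ R^m be nonzero with 𝔰(a) = 𝔰(b) and lc(a) = lc(b), and let G ⊆ R^m be a signature Gröbner basis up to 𝔰(a). If both a and b are regular s-irreducible modulo G, then ‾a = ‾b. -/

import Mathlib

namespace SigGB

noncomputable section

/-- Power-products in `n` indeterminates, written additively as exponent vectors
(so the power-product `1` is `0`, and multiplication of power-products is `+`). -/
abbrev PP (n : ℕ) : Type := Fin n →₀ ℕ

/-- Terms: a power-product together with a component index (`t·e_i ↝ (t, i)`). -/
abbrev Term (n m : ℕ) : Type := PP n × Fin m

/-- Multiplication of a term by a power-product: `t ⊗ (s·e_i) = (t·s)·e_i`. -/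
def mulTerm {n m : ℕ} (t : PP n) (u : Term n m) : Term n m := (t + u.1, u.2)

/-- Divisibility of terms: `u ∣ v` iff `v = t ⊗ u` for some power-product `t`. -/
def termDvd {n m : ℕ} (u v : Term n m) : Prop := ∃ t : PP n, v = mulTerm t u

/-- Componentwise lcm of power-products. -/
noncomputable def lcmPP {n : ℕ} (s t : PP n) : PP n := Finsupp.zipWith max (max_self 0) s t

/-- Strict part of a relation. -/
def strict {α : Type*} (r : α → α → Prop) (x y : α) : Prop := r x y ∧ x ≠ y

/-- `ple` is an admissible order on power-products and `tle` is a compatible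
linear order on terms. -/
structure OrdersOK {n m : ℕ} (ple : PP n → PP n → Prop)
    (tle : Term n m → Term n m → Prop) : Prop where
  ple_refl : ∀ t, ple t t
  ple_trans : ∀ s t u, ple s t → ple t u → ple s u
  ple_antisymm : ∀ s t, ple s t → ple t s → s = t
  ple_total : ∀ s t, ple s t ∨ ple t s
  ple_one_le : ∀ t, ple 0 t
  ple_mul : ∀ (t s₁ s₂ : PP n), ple s₁ s₂ → ple (t + s₁) (t + s₂)
  tle_refl : ∀ u, tle u u
  tle_trans : ∀ u v w, tle u v → tle v w → tle u w
  tle_antisymm : ∀ u v, tle u v → tle v u → u = v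
  tle_total : ∀ u v, tle u v ∨ tle v u
  tle_mul : ∀ (t : PP n) (u v : Term n m), tle u v → tle (mulTerm t u) (mulTerm t v)
  tle_compat : ∀ (s t : PP n) (i j : Fin m), ple s t → i ≤ j → tle (s, i) (t, j)

variable {K : Type*} [Field K] {n m : ℕ} [NeZero m]

variable (f : Fin m → MvPolynomial (Fin n) K)
variable (ple : PP n → PP n → Prop)
variable (tle : Term n m → Term n m → Prop)

/-- The module homomorphism `R^m → R` determined by `e_i ↦ f i`, i.e. `a ↦ ‾a`. -/
def bar (a : Fin m → MvPolynomial (Fin n) K) : MvPolynomial (Fin n) K := ∑ i, a i * f i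

/-- Multiplication of a module element by a coefficient `c` and a power-product `t`. -/
noncomputable def monomMul (c : K) (t : PP n) (a : Fin m → MvPolynomial (Fin n) K) :
    Fin m → MvPolynomial (Fin n) K :=
  fun i => MvPolynomial.monomial t c * a i

/-- The coefficient of a term in a module element. -/
def coeffM (a : Fin m → MvPolynomial (Fin n) K) (u : Term n m) : K :=
  MvPolynomial.coeff u.1 (a u.2)

open Classical in
/-- Leading power-product of a polynomial w.r.t. `ple`
(junk value `0`, i.e. the power-product `1`, for the zero polynomial). -/
noncomputable def lp (p : MvPolynomial (Fin n) K) : PP n :=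
  if h : ∃ t, MvPolynomial.coeff t p ≠ 0 ∧ ∀ s, MvPolynomial.coeff s p ≠ 0 → ple s t
  then h.choose else 0

/-- Leading coefficient of a polynomial w.r.t. `ple`. -/
noncomputable def lc (p : MvPolynomial (Fin n) K) : K := MvPolynomial.coeff (lp ple p) p

open Classical in
/-- Signature of a module element: its `tle`-largest term with nonzero coefficient
(junk value for `0`). -/
noncomputable def sig (a : Fin m → MvPolynomial (Fin n) K) : Term n m :=
  if h : ∃ u, coeffM a u ≠ 0 ∧ ∀ v, coeffM a v ≠ 0 → tle v u
  then h.choose else ((0 : PP n), (0 : Fin m))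

/-- Leading coefficient of a module element. -/
noncomputable def lcM (a : Fin m → MvPolynomial (Fin n) K) : K := coeffM a (sig tle a)

/-- One-step s-reduction of `a` to `b` modulo `G`, witnessed by `g ∈ G` and the
power-product `t`. -/
def RedStepWith (G : Set (Fin m → MvPolynomial (Fin n) K))
    (a b g : Fin m → MvPolynomial (Fin n) K) (t : PP n) : Prop :=
  g ∈ G ∧ bar f g ≠ 0 ∧
    MvPolynomial.coeff (t + lp ple (bar f g)) (bar f a) ≠ 0 ∧
    b = a - monomMul (MvPolynomial.coeff (t + lp ple (bar f g)) (bar f a) / lc ple (bar f g)) t g ∧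
    tle (mulTerm t (sig tle g)) (sig tle a)

/-- The step witnessed by `g` and `t` is regular: `t ⊗ 𝔰(g) ≺_t 𝔰(a)`. -/
def RegularWith (a g : Fin m → MvPolynomial (Fin n) K) (t : PP n) : Prop :=
  strict tle (mulTerm t (sig tle g)) (sig tle a)

/-- The step witnessed by `g` and `t` is top: `t·lp(‾g) = lp(‾a)`. -/
def TopWith (a g : Fin m → MvPolynomial (Fin n) K) (t : PP n) : Prop :=
  t + lp ple (bar f g) = lp ple (bar f a)

/-- `a` s-reduces to `b` modulo `G` in one step. -/
def SigRedStep (G : Set (Fin m → MvPolynomial (Fin n) K))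
    (a b : Fin m → MvPolynomial (Fin n) K) : Prop :=
  ∃ g t, RedStepWith f ple tle G a b g t

/-- `a` regular s-reduces to `b` modulo `G` in one step. -/
def RegRedStep (G : Set (Fin m → MvPolynomial (Fin n) K))
    (a b : Fin m → MvPolynomial (Fin n) K) : Prop :=
  ∃ g t, RedStepWith f ple tle G a b g t ∧ RegularWith tle a g t

/-- `a` regular top s-reduces to `b` modulo `G` in one step. -/
def RegTopRedStep (G : Set (Fin m → MvPolynomial (Fin n) K))
    (a b : Fin m → MvPolynomial (Fin n) K) : Prop :=
  ∃ g t, RedStepWith f ple tle G a b g t ∧ RegularWith tle a g t ∧ TopWith f ple a g t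

/-- `a` is regular s-irreducible modulo `G`. -/
def RegIrred (G : Set (Fin m → MvPolynomial (Fin n) K))
    (a : Fin m → MvPolynomial (Fin n) K) : Prop :=
  ∀ b, ¬ RegRedStep f ple tle G a b

/-- `a` is regular top s-irreducible modulo `G`. -/
def RegTopIrred (G : Set (Fin m → MvPolynomial (Fin n) K))
    (a : Fin m → MvPolynomial (Fin n) K) : Prop :=
  ∀ b, ¬ RegTopRedStep f ple tle G a b

/-- `a` s-reduces to zero modulo `G`. -/
def SigRedZero (G : Set (Fin m → MvPolynomial (Fin n) K))
    (a : Fin m → MvPolynomial (Fin n) K) : Prop :=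
  ∃ b, Relation.ReflTransGen (SigRedStep f ple tle G) a b ∧ bar f b = 0

/-- `a` regular s-reduces to zero modulo `G`. -/
def RegRedZero (G : Set (Fin m → MvPolynomial (Fin n) K))
    (a : Fin m → MvPolynomial (Fin n) K) : Prop :=
  ∃ b, Relation.ReflTransGen (RegRedStep f ple tle G) a b ∧ bar f b = 0

/-- `G` is a signature Gröbner basis in the term `u`. -/
def IsSigGBIn (G : Set (Fin m → MvPolynomial (Fin n) K)) (u : Term n m) : Prop :=
  ∀ a : Fin m → MvPolynomial (Fin n) K, a ≠ 0 → sig tle a = u → SigRedZero f ple tle G a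

/-- `G` is a signature Gröbner basis up to the term `u`. -/
def IsSigGBUpto (G : Set (Fin m → MvPolynomial (Fin n) K)) (u : Term n m) : Prop :=
  ∀ v, strict tle v u → IsSigGBIn f ple tle G v

/-- `u` is a syzygy signature. -/
def IsSyzSig (u : Term n m) : Prop :=
  ∃ a : Fin m → MvPolynomial (Fin n) K, a ≠ 0 ∧ sig tle a = u ∧ bar f a = 0

/-- The sig-poly-pair `(𝔰(a), ‾a)` of a module element `a`. -/
noncomputable def sppOf (a : Fin m → MvPolynomial (Fin n) K) :
    Term n m × MvPolynomial (Fin n) K :=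
  (sig tle a, bar f a)

/-- `x` is a sig-poly-pair. -/
def IsSPP (x : Term n m × MvPolynomial (Fin n) K) : Prop :=
  ∃ a : Fin m → MvPolynomial (Fin n) K, a ≠ 0 ∧ sppOf f tle a = x

/-- `ro` is a rewrite order. -/
def IsRewriteOrder
    (ro : Term n m × MvPolynomial (Fin n) K → Term n m × MvPolynomial (Fin n) K → Prop) :
    Prop :=
  (∀ x, IsSPP f tle x → ro x x) ∧
  (∀ x y z, IsSPP f tle x → IsSPP f tle y → IsSPP f tle z → ro x y → ro y z → ro x z) ∧
  (∀ x y, IsSPP f tle x → IsSPP f tle y → (ro x y ∨ ro y x)) ∧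
  (∀ x y, IsSPP f tle x → IsSPP f tle y → ro x y → ro y x → x.1 = y.1) ∧
  (∀ (G : Set (Fin m → MvPolynomial (Fin n) K)) (a b : Fin m → MvPolynomial (Fin n) K),
    IsSigGBUpto f ple tle G (sig tle b) → a ∈ G → b ∈ G → a ≠ 0 → b ≠ 0 →
    termDvd (sig tle a) (sig tle b) → RegTopIrred f ple tle G b →
    ro (sppOf f tle a) (sppOf f tle b))

/-- `a` is a canonical rewriter in the term `u` w.r.t. `G` (for the rewrite order `ro`). -/
def IsCanonRewriter
    (ro : Term n m × MvPolynomial (Fin n) K → Term n m × MvPolynomial (Fin n) K → Prop)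
    (G : Set (Fin m → MvPolynomial (Fin n) K)) (u : Term n m)
    (a : Fin m → MvPolynomial (Fin n) K) : Prop :=
  a ∈ G ∧ a ≠ 0 ∧ termDvd (sig tle a) u ∧
    ∀ g ∈ G, g ≠ 0 → termDvd (sig tle g) u → ro (sppOf f tle g) (sppOf f tle a)

/-- `G` is a rewrite basis in the term `u` (for the rewrite order `ro`). -/
def IsRBIn
    (ro : Term n m × MvPolynomial (Fin n) K → Term n m × MvPolynomial (Fin n) K → Prop)
    (G : Set (Fin m → MvPolynomial (Fin n) K)) (u : Term n m) : Prop :=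
  IsSyzSig f tle u ∨
    ∃ g, IsCanonRewriter f tle ro G u g ∧
      RegTopIrred f ple tle G (monomMul (1 : K) (u.1 - (sig tle g).1) g)

/-- `G` is a rewrite basis up to the term `u` (for the rewrite order `ro`). -/
def IsRBUpto
    (ro : Term n m × MvPolynomial (Fin n) K → Term n m × MvPolynomial (Fin n) K → Prop)
    (G : Set (Fin m → MvPolynomial (Fin n) K)) (u : Term n m) : Prop :=
  ∀ v, strict tle v u → IsRBIn f ple tle ro G v

/-- The S-pair of two module elements. -/
noncomputable def spair (a b : Fin m → MvPolynomial (Fin n) K) :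
    Fin m → MvPolynomial (Fin n) K :=
  monomMul ((1 : K) / lc ple (bar f a))
      (lcmPP (lp ple (bar f a)) (lp ple (bar f b)) - lp ple (bar f a)) a -
    monomMul ((1 : K) / lc ple (bar f b))
      (lcmPP (lp ple (bar f a)) (lp ple (bar f b)) - lp ple (bar f b)) b

/-- `a` and `b` give rise to a regular S-pair. -/
def IsRegularSPair (a b : Fin m → MvPolynomial (Fin n) K) : Prop :=
  bar f a ≠ 0 ∧ bar f b ≠ 0 ∧
    mulTerm (lcmPP (lp ple (bar f a)) (lp ple (bar f b)) - lp ple (bar f a)) (sig tle a) ≠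
      mulTerm (lcmPP (lp ple (bar f a)) (lp ple (bar f b)) - lp ple (bar f b)) (sig tle b)

/-- `B` is a Gröbner basis of the ideal `I` w.r.t. `ple`. -/
def IsGroebnerBasis (B : Set (MvPolynomial (Fin n) K)) (I : Ideal (MvPolynomial (Fin n) K)) :
    Prop :=
  (∀ b ∈ B, b ∈ I) ∧ Ideal.span B = I ∧
    ∀ p ∈ I, p ≠ 0 → ∃ b ∈ B, b ≠ 0 ∧ ∃ t : PP n, lp ple p = t + lp ple b

/-- One step of ordinary polynomial reduction of `p` to `q` modulo `B`. -/
def PolyRedStep (B : Set (MvPolynomial (Fin n) K)) (p q : MvPolynomial (Fin n) K) : Prop :=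
  ∃ r ∈ B, r ≠ 0 ∧ ∃ t : PP n, MvPolynomial.coeff (t + lp ple r) p ≠ 0 ∧
    q = p - MvPolynomial.monomial t (MvPolynomial.coeff (t + lp ple r) p / lc ple r) * r

/-!
Suppose `‾a ≠ ‾b`. Since the leading terms of `a` and `b` cancel, `𝔰(a - b) ≺ 𝔰(a)`, so `a - b`
s-reduces to zero. Reduction steps at smaller power-products do not affect the leading one, so
some step has to cancel `s := lp(‾a - ‾b)`, and its reducer `t ⊗ g` has signature at most
`𝔰(a - b)`. Hence `t ⊗ g` would regularly s-reduce both `a` and `b` at `s`, unless `s` occurs in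
neither `‾a` nor `‾b`; but it occurs in their difference.

A zero module element has a junk signature, so reductions are controlled by upper bounds of the
support (`SupportLE`) instead of by signatures.
-/

theorem strict_of_rel_of_strict {α : Type*} {r : α → α → Prop} [IsTrans α r] [Std.Antisymm r]
    {x y z : α} (hxy : r x y) (hyz : strict r y z) : strict r x z := by
  refine ⟨_root_.trans hxy hyz.1, ?_⟩
  rintro rfl
  exact hyz.2 (antisymm hyz.1 hxy)

section SupportLE

variable {ι M : Type*} {r : ι → ι → Prop}

/-- The index `u` is an `r`-upper bound of the support of the coefficient family `c`. Taking for
`c` the coefficients of a polynomial or of a module element gives upper bounds for `lp` and `sig`;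
unlike these, the notion has no junk value at `c = 0`, where every `u` is an upper bound. -/
def SupportLE [Zero M] (r : ι → ι → Prop) (c : ι → M) (u : ι) : Prop :=
  ∀ v, c v ≠ 0 → r v u

theorem exists_ne_zero_and_supportLE [Zero M] [IsTrans ι r] [Std.Total r] {c : ι → M}
    (hfin : c.support.Finite) (hc : c ≠ 0) : ∃ u, c u ≠ 0 ∧ SupportLE r c u := by
  have : Nonempty c.support := (Function.support_nonempty_iff.mpr hc).to_subtype
  have : Fintype c.support := hfin.fintype
  obtain ⟨u, hu⟩ := (Std.Total.directed (r := r) ((↑) : c.support → ι)).finset_le Finset.univ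
  exact ⟨u, u.2, fun v hv => hu ⟨v, hv⟩ (Finset.mem_univ _)⟩

theorem SupportLE.trans [Zero M] [IsTrans ι r] {c : ι → M} {u v : ι} (h : SupportLE r c u)
    (huv : r u v) : SupportLE r c v :=
  fun w hw => _root_.trans (h w hw) huv

theorem SupportLE.eq_zero_of_strict [Zero M] [Std.Antisymm r] {c : ι → M} {u v : ι}
    (h : SupportLE r c u) (huv : strict r u v) : c v = 0 :=
  not_ne_iff.mp fun hv => huv.2 (antisymm huv.1 (h v hv))

theorem SupportLE.sub [AddGroup M] {c d : ι → M} {u : ι} (hc : SupportLE r c u)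
    (hd : SupportLE r d u) : SupportLE r (c - d) u := fun v hv =>
  (Function.support_sub c d hv).elim (hc v) (hd v)

end SupportLE

section MonomialMul

variable {σ R : Type*} [CommSemiring R]

theorem exists_eq_add_of_coeff_monomial_mul_ne_zero {t s : σ →₀ ℕ} {c : R} {p : MvPolynomial σ R}
    (h : (MvPolynomial.monomial t c * p).coeff s ≠ 0) : ∃ q, s = t + q ∧ p.coeff q ≠ 0 := by
  rw [MvPolynomial.coeff_monomial_mul'] at h
  obtain ⟨hts, hne⟩ := ite_ne_right_iff.mp h
  exact ⟨s - t, (add_tsub_cancel_of_le hts).symm, right_ne_zero_of_mul hne⟩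

theorem SupportLE.monomial_mul {r : (σ →₀ ℕ) → (σ →₀ ℕ) → Prop}
    [CovariantClass (σ →₀ ℕ) (σ →₀ ℕ) (· + ·) r] {p : MvPolynomial σ R} {u : σ →₀ ℕ}
    (h : SupportLE r p.coeff u) (t : σ →₀ ℕ) (c : R) :
    SupportLE r (MvPolynomial.monomial t c * p).coeff (t + u) := by
  intro s hs
  obtain ⟨q, rfl, hq⟩ := exists_eq_add_of_coeff_monomial_mul_ne_zero hs
  exact act_rel_act_of_rel (μ := (· + ·)) t (h q hq)

end MonomialMul

section Uniqueness

variable {f ple tle} {G : Set (Fin m → MvPolynomial (Fin n) K)}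
  {a b g : Fin m → MvPolynomial (Fin n) K} {t : PP n}

section ModuleElements

omit [NeZero m]

theorem coeffM_sub (a b : Fin m → MvPolynomial (Fin n) K) :
    coeffM (a - b) = coeffM a - coeffM b := by
  ext u
  simp [coeffM]

theorem coeffM_ne_zero (ha : a ≠ 0) : coeffM a ≠ 0 := by
  contrapose! ha
  ext i s
  exact congrFun ha (s, i)

theorem finite_support_coeffM (a : Fin m → MvPolynomial (Fin n) K) :
    (coeffM a).support.Finite := by
  refine (Set.finite_iUnion fun i => (a i).support.finite_toSet.image (·, i)).subset ?_
  rintro ⟨s, i⟩ hs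
  exact Set.mem_iUnion.mpr ⟨i, s, MvPolynomial.mem_support_iff.mpr hs, rfl⟩

theorem SupportLE.monomMul [CovariantClass (PP n) (Term n m) mulTerm tle] {u : Term n m}
    (h : SupportLE tle (coeffM a) u) (t : PP n) (c : K) :
    SupportLE tle (coeffM (monomMul c t a)) (mulTerm t u) := by
  rintro ⟨s, i⟩ hs
  obtain ⟨q, rfl, hq⟩ := exists_eq_add_of_coeff_monomial_mul_ne_zero hs
  exact act_rel_act_of_rel (μ := mulTerm) t (h (q, i) hq)

theorem bar_zero : bar f 0 = 0 := by
  simp [bar]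

theorem bar_sub (a b : Fin m → MvPolynomial (Fin n) K) :
    bar f (a - b) = bar f a - bar f b := by
  simp [bar, sub_mul]

theorem bar_monomMul (c : K) (t : PP n) (a : Fin m → MvPolynomial (Fin n) K) :
    bar f (monomMul c t a) = MvPolynomial.monomial t c * bar f a := by
  simp [bar, monomMul, Finset.mul_sum, mul_assoc]

end ModuleElements

section LeadingPowerProduct

variable [IsTrans (PP n) ple] [Std.Total ple] {p : MvPolynomial (Fin n) K}

theorem coeff_lp_ne_zero_and_supportLE (hp : p ≠ 0) :
    p.coeff (lp ple p) ≠ 0 ∧ SupportLE ple p.coeff (lp ple p) := by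
  have h : ∃ t, p.coeff t ≠ 0 ∧ ∀ s, p.coeff s ≠ 0 → ple s t :=
    exists_ne_zero_and_supportLE
      (p.support.finite_toSet.subset fun _ => MvPolynomial.mem_support_iff.mpr)
      fun hzero => hp (MvPolynomial.ext _ _ (congrFun hzero))
  rw [lp, dif_pos h]
  exact h.choose_spec

theorem coeff_lp_ne_zero (hp : p ≠ 0) : p.coeff (lp ple p) ≠ 0 :=
  (coeff_lp_ne_zero_and_supportLE hp).1

theorem supportLE_lp (p : MvPolynomial (Fin n) K) : SupportLE ple p.coeff (lp ple p) :=
  fun s hs => (coeff_lp_ne_zero_and_supportLE (MvPolynomial.ne_zero_iff.mpr ⟨s, hs⟩)).2 s hs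

end LeadingPowerProduct

section Signature

variable [IsTrans (Term n m) tle] [Std.Total tle]

theorem coeffM_sig_ne_zero_and_supportLE (ha : a ≠ 0) :
    coeffM a (sig tle a) ≠ 0 ∧ SupportLE tle (coeffM a) (sig tle a) := by
  have h : ∃ u, coeffM a u ≠ 0 ∧ ∀ v, coeffM a v ≠ 0 → tle v u :=
    exists_ne_zero_and_supportLE (finite_support_coeffM a) (coeffM_ne_zero ha)
  rw [sig, dif_pos h]
  exact h.choose_spec

theorem coeffM_sig_ne_zero (ha : a ≠ 0) : coeffM a (sig tle a) ≠ 0 :=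
  (coeffM_sig_ne_zero_and_supportLE ha).1

theorem supportLE_sig (a : Fin m → MvPolynomial (Fin n) K) :
    SupportLE tle (coeffM a) (sig tle a) := by
  intro v hv
  have ha : a ≠ 0 := by
    rintro rfl
    exact hv (MvPolynomial.coeff_zero _)
  exact (coeffM_sig_ne_zero_and_supportLE ha).2 v hv

theorem strict_sig_sub (hab : a ≠ b) (hsig : sig tle a = sig tle b)
    (hlc : lcM tle a = lcM tle b) : strict tle (sig tle (a - b)) (sig tle a) := by
  have hlead : coeffM (a - b) (sig tle (a - b)) ≠ 0 := coeffM_sig_ne_zero (sub_ne_zero.mpr hab)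
  have hcancel : coeffM (a - b) (sig tle a) = 0 := by
    rw [coeffM_sub, Pi.sub_apply, sub_eq_zero]
    exact hlc.trans (congrArg (coeffM b) hsig.symm)
  have hle : SupportLE tle (coeffM (a - b)) (sig tle a) :=
    coeffM_sub a b ▸ (supportLE_sig a).sub (hsig ▸ supportLE_sig b)
  exact ⟨hle _ hlead, fun heq => hlead (heq ▸ hcancel)⟩

end Signature

section Reduction

theorem RedStepWith.bar_eq (h : RedStepWith f ple tle G a b g t) :
    ∃ c, bar f b = bar f a - MvPolynomial.monomial t c * bar f g := by
  obtain ⟨-, -, -, rfl, -⟩ := h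
  exact ⟨_, by rw [bar_sub, bar_monomMul]⟩

theorem RedStepWith.ne_zero (h : RedStepWith f ple tle G a b g t) : a ≠ 0 := by
  rintro rfl
  exact h.2.2.1 (by rw [bar_zero, MvPolynomial.coeff_zero])

section Signature

variable [IsTrans (Term n m) tle] [Std.Total tle] {w : Term n m}

theorem RedStepWith.mulTerm_sig_le (h : RedStepWith f ple tle G a b g t)
    (ha : SupportLE tle (coeffM a) w) : tle (mulTerm t (sig tle g)) w :=
  _root_.trans h.2.2.2.2 (ha _ (coeffM_sig_ne_zero h.ne_zero))

theorem RedStepWith.supportLE_coeffM [CovariantClass (PP n) (Term n m) mulTerm tle]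
    (h : RedStepWith f ple tle G a b g t) (ha : SupportLE tle (coeffM a) w) :
    SupportLE tle (coeffM b) w := by
  have hg := h.mulTerm_sig_le ha
  obtain ⟨-, -, -, rfl, -⟩ := h
  rw [coeffM_sub]
  exact ha.sub (((supportLE_sig g).monomMul t _).trans hg)

end Signature

section LeadingPowerProduct

variable [IsTrans (PP n) ple] [Std.Total ple] [CovariantClass (PP n) (PP n) (· + ·) ple] {s : PP n}

theorem RedStepWith.supportLE_bar (h : RedStepWith f ple tle G a b g t)
    (ha : SupportLE ple (bar f a).coeff s) : SupportLE ple (bar f b).coeff s := by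
  obtain ⟨c, hb⟩ := h.bar_eq
  rw [hb]
  exact ha.sub (((supportLE_lp (bar f g)).monomial_mul t c).trans (ha _ h.2.2.1))

theorem RedStepWith.coeff_bar_eq [Std.Antisymm ple] (h : RedStepWith f ple tle G a b g t)
    (ha : SupportLE ple (bar f a).coeff s) (hne : t + lp ple (bar f g) ≠ s) :
    (bar f b).coeff s = (bar f a).coeff s := by
  obtain ⟨c, hb⟩ := h.bar_eq
  have hcoeff : (MvPolynomial.monomial t c * bar f g).coeff s = 0 :=
    ((supportLE_lp (bar f g)).monomial_mul t c).eq_zero_of_strict ⟨ha _ h.2.2.1, hne⟩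
  rw [hb, MvPolynomial.coeff_sub, hcoeff, sub_zero]

end LeadingPowerProduct

theorem RegIrred.coeff_eq_zero (h : RegIrred f ple tle G a) (hgG : g ∈ G) (hg : bar f g ≠ 0)
    (ht : strict tle (mulTerm t (sig tle g)) (sig tle a)) :
    (bar f a).coeff (t + lp ple (bar f g)) = 0 :=
  not_ne_iff.mp fun hne => h _ ⟨g, t, ⟨hgG, hg, hne, rfl, ht.1⟩, ht⟩

variable [IsLinearOrder (PP n) ple] [CovariantClass (PP n) (PP n) (· + ·) ple]
  [IsTrans (Term n m) tle] [Std.Total tle] [CovariantClass (PP n) (Term n m) mulTerm tle]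

theorem SigRedZero.exists_add_lp_eq (h : SigRedZero f ple tle G a) {s : PP n} {w : Term n m}
    (hs : (bar f a).coeff s ≠ 0) (hsmax : SupportLE ple (bar f a).coeff s)
    (hw : SupportLE tle (coeffM a) w) :
    ∃ g ∈ G, bar f g ≠ 0 ∧ ∃ t, t + lp ple (bar f g) = s ∧ tle (mulTerm t (sig tle g)) w := by
  obtain ⟨z, haz, hz⟩ := h
  induction haz using Relation.ReflTransGen.head_induction_on with
  | refl => exact absurd (by rw [hz, MvPolynomial.coeff_zero]) hs
  | head hstep _ ih =>
    obtain ⟨g, t, hstep⟩ := hstep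
    by_cases hlead : t + lp ple (bar f g) = s
    · exact ⟨g, hstep.1, hstep.2.1, t, hlead, hstep.mulTerm_sig_le hw⟩
    · exact ih ((hstep.coeff_bar_eq hsmax hlead).trans_ne hs) (hstep.supportLE_bar hsmax)
        (hstep.supportLE_coeffM hw)

theorem RegIrred.bar_eq_of_sigRedZero_sub [Std.Antisymm tle] (ha : RegIrred f ple tle G a)
    (hb : RegIrred f ple tle G b) (hred : SigRedZero f ple tle G (a - b))
    (hsiga : strict tle (sig tle (a - b)) (sig tle a))
    (hsigb : strict tle (sig tle (a - b)) (sig tle b)) : bar f a = bar f b := by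
  by_contra hne
  have hs : (bar f (a - b)).coeff (lp ple (bar f (a - b))) ≠ 0 :=
    coeff_lp_ne_zero (by rwa [bar_sub, sub_ne_zero])
  obtain ⟨g, hgG, hg, t, ht, hle⟩ := hred.exists_add_lp_eq hs (supportLE_lp _) (supportLE_sig _)
  have hcoeffa := ha.coeff_eq_zero hgG hg (strict_of_rel_of_strict hle hsiga)
  have hcoeffb := hb.coeff_eq_zero hgG hg (strict_of_rel_of_strict hle hsigb)
  apply hs
  rw [← ht, bar_sub, MvPolynomial.coeff_sub, hcoeffa, hcoeffb, sub_zero]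

theorem reg_irred_unique_general [Std.Antisymm tle] (hsig : sig tle a = sig tle b)
    (hlc : lcM tle a = lcM tle b) (hGB : IsSigGBUpto f ple tle G (sig tle a))
    (ha : RegIrred f ple tle G a) (hb : RegIrred f ple tle G b) : bar f a = bar f b := by
  rcases eq_or_ne a b with rfl | hab
  · rfl
  · have hlt := strict_sig_sub hab hsig hlc
    have hred := hGB _ hlt (a - b) (sub_ne_zero.mpr hab) rfl
    exact ha.bar_eq_of_sigRedZero_sub hb hred hlt (hsig ▸ hlt)

end Reduction

section OrdersOK

omit [NeZero m]

theorem OrdersOK.isLinearOrder (h : OrdersOK ple tle) :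
    IsLinearOrder (PP n) ple ∧ IsLinearOrder (Term n m) tle :=
  ⟨{ refl := h.ple_refl, trans := h.ple_trans, antisymm := h.ple_antisymm, total := h.ple_total },
    { refl := h.tle_refl, trans := h.tle_trans, antisymm := h.tle_antisymm, total := h.tle_total }⟩

theorem OrdersOK.covariantClass (h : OrdersOK ple tle) :
    CovariantClass (PP n) (PP n) (· + ·) ple ∧ CovariantClass (PP n) (Term n m) mulTerm tle :=
  ⟨⟨h.ple_mul⟩, ⟨h.tle_mul⟩⟩

end OrdersOK

end Uniqueness

/-- uniqueness of `‾a` for regular s-irreducible elements with equal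
signatures and leading coefficients. -/
theorem reg_irred_unique (hord : OrdersOK ple tle)
    (G : Set (Fin m → MvPolynomial (Fin n) K))
    (a b : Fin m → MvPolynomial (Fin n) K) (ha : a ≠ 0) (hb : b ≠ 0)
    (hsig : sig tle a = sig tle b) (hlc : lcM tle a = lcM tle b)
    (hGB : IsSigGBUpto f ple tle G (sig tle a))
    (hirra : RegIrred f ple tle G a) (hirrb : RegIrred f ple tle G b) :
    bar f a = bar f b := by
  obtain ⟨_, _⟩ := hord.isLinearOrder
  obtain ⟨_, _⟩ := hord.covariantClass
  exact reg_irred_unique_general hsig hlc hGB hirra hirrb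

end

end SigGB
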